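/- Let ℰ be an exact structure on an abelian category 𝒜 such that 𝒜 has enough ℰ-projectives and enough ℰ-injectives. If 𝒴 is an ℰ-coresolving class of objects such that every object of 𝒜 admits a monomorphic 𝒴-envelope, then every object A of 𝒜 admits an epimorphic ^⊥𝒴-precover p : X → A with Ker p ∈ 𝒴. -/

import Mathlib

open CategoryTheory Category Limits

universe v u

namespace ExactPaper

variable {𝒜 : Type u} [Category.{v} 𝒜] [Abelian 𝒜]

/-- A morphism is an admissible monic w.r.t. a class `c` of short complexes if it occurs
as the first map of a member of `c`. -/
def AdmMono (c : ShortComplex 𝒜 → Prop) {X Y : 𝒜} (f : X ⟶ Y) : Prop :=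
  ∃ (Z : 𝒜) (g : Y ⟶ Z) (w : f ≫ g = 0), c (ShortComplex.mk f g w)

/-- A morphism is an admissible epic w.r.t. a class `c` of short complexes if it occurs
as the second map of a member of `c`. -/
def AdmEpi (c : ShortComplex 𝒜 → Prop) {Y Z : 𝒜} (g : Y ⟶ Z) : Prop :=
  ∃ (X : 𝒜) (f : X ⟶ Y) (w : f ≫ g = 0), c (ShortComplex.mk f g w)

/-- A (Quillen) exact structure on an abelian category `𝒜`: a class of short exact
sequences, called conflations, closed under isomorphisms, containing all split short
exact sequences, such that admissible monics and epics are closed under composition,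
pushouts of admissible monics along arbitrary morphisms are admissible monics and
pullbacks of admissible epics along arbitrary morphisms are admissible epics. -/
structure ExactStructure (𝒜 : Type u) [Category.{v} 𝒜] [Abelian 𝒜] where
  conflation : ShortComplex 𝒜 → Prop
  shortExact_of_conflation : ∀ (S : ShortComplex 𝒜), conflation S → S.ShortExact
  conflation_of_iso : ∀ (S T : ShortComplex 𝒜), (S ≅ T) → conflation S → conflation T
  conflation_of_splitting : ∀ (S : ShortComplex 𝒜), S.Splitting → conflation S
  admMono_comp : ∀ {X Y Z : 𝒜} (f : X ⟶ Y) (g : Y ⟶ Z),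
    AdmMono conflation f → AdmMono conflation g → AdmMono conflation (f ≫ g)
  admEpi_comp : ∀ {X Y Z : 𝒜} (f : X ⟶ Y) (g : Y ⟶ Z),
    AdmEpi conflation f → AdmEpi conflation g → AdmEpi conflation (f ≫ g)
  admMono_pushout : ∀ {L M M' : 𝒜} (i : L ⟶ M) (f : L ⟶ M'),
    AdmMono conflation i → AdmMono conflation (pushout.inr i f)
  admEpi_pullback : ∀ {M N M' : 𝒜} (p : M ⟶ N) (g : M' ⟶ N),
    AdmEpi conflation p → AdmEpi conflation (pullback.snd p g)

namespace ExactStructure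

variable (E : ExactStructure 𝒜)

/-- An `ℰ`-projective object. -/
def EProjective (P : 𝒜) : Prop :=
  ∀ (S : ShortComplex 𝒜), E.conflation S → ∀ h : P ⟶ S.X₃, ∃ k : P ⟶ S.X₂, k ≫ S.g = h

/-- An `ℰ`-injective object. -/
def EInjective (I : 𝒜) : Prop :=
  ∀ (S : ShortComplex 𝒜), E.conflation S → ∀ h : S.X₁ ⟶ I, ∃ k : S.X₂ ⟶ I, S.f ≫ k = h

/-- `𝒜` has enough `ℰ`-projectives. -/
def EnoughProjectives : Prop :=
  ∀ M : 𝒜, ∃ (K P : 𝒜) (i : K ⟶ P) (p : P ⟶ M) (w : i ≫ p = 0),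
    E.conflation (ShortComplex.mk i p w) ∧ E.EProjective P

/-- `𝒜` has enough `ℰ`-injectives. -/
def EnoughInjectives : Prop :=
  ∀ M : 𝒜, ∃ (I C : 𝒜) (i : M ⟶ I) (p : I ⟶ C) (w : i ≫ p = 0),
    E.conflation (ShortComplex.mk i p w) ∧ E.EInjective I

/-- `Ext¹_ℰ(M,N) = 0`: every conflation `0 → N → Z → M → 0` splits. -/
def Ext1Zero (M N : 𝒜) : Prop :=
  ∀ (Z : 𝒜) (i : N ⟶ Z) (p : Z ⟶ M) (w : i ≫ p = 0),
    E.conflation (ShortComplex.mk i p w) → ∃ r : Z ⟶ N, i ≫ r = 𝟙 N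

/-- The right `ℰ`-orthogonal class `𝒳^⊥`. -/
def rightPerp (𝒳 : Set 𝒜) : Set 𝒜 := {N | ∀ X ∈ 𝒳, E.Ext1Zero X N}

/-- The left `ℰ`-orthogonal class `^⊥𝒴`. -/
def leftPerp (𝒴 : Set 𝒜) : Set 𝒜 := {M | ∀ Y ∈ 𝒴, E.Ext1Zero M Y}

/-- A class is closed under `ℰ`-extensions. -/
def ClosedUnderExtensions (𝒯 : Set 𝒜) : Prop :=
  ∀ S : ShortComplex 𝒜, E.conflation S → S.X₁ ∈ 𝒯 → S.X₃ ∈ 𝒯 → S.X₂ ∈ 𝒯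

/-- An `ℰ`-resolving class. -/
def Resolving (𝒯 : Set 𝒜) : Prop :=
  (∀ P : 𝒜, E.EProjective P → P ∈ 𝒯) ∧ E.ClosedUnderExtensions 𝒯 ∧
    ∀ S : ShortComplex 𝒜, E.conflation S → S.X₂ ∈ 𝒯 → S.X₃ ∈ 𝒯 → S.X₁ ∈ 𝒯

/-- An `ℰ`-coresolving class. -/
def Coresolving (𝒯 : Set 𝒜) : Prop :=
  (∀ I : 𝒜, E.EInjective I → I ∈ 𝒯) ∧ E.ClosedUnderExtensions 𝒯 ∧
    ∀ S : ShortComplex 𝒜, E.conflation S → S.X₁ ∈ 𝒯 → S.X₂ ∈ 𝒯 → S.X₃ ∈ 𝒯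

/-- `(𝒳,𝒴)` is a complete hereditary `ℰ`-cotorsion pair. -/
def CompleteHereditaryCotorsionPair (𝒳 𝒴 : Set 𝒜) : Prop :=
  𝒳 = E.leftPerp 𝒴 ∧ 𝒴 = E.rightPerp 𝒳 ∧
  (∀ A : 𝒜, ∃ (Y X : 𝒜) (i : Y ⟶ X) (p : X ⟶ A) (w : i ≫ p = 0),
      E.conflation (ShortComplex.mk i p w) ∧ X ∈ 𝒳 ∧ Y ∈ 𝒴) ∧
  (∀ A : 𝒜, ∃ (Y' X' : 𝒜) (i : A ⟶ Y') (p : Y' ⟶ X') (w : i ≫ p = 0),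
      E.conflation (ShortComplex.mk i p w) ∧ X' ∈ 𝒳 ∧ Y' ∈ 𝒴) ∧
  E.Resolving 𝒳

end ExactStructure

/-- `f : X ⟶ A` is an `𝒳`-precover of `A`. -/
def IsPrecover (𝒳 : Set 𝒜) {X A : 𝒜} (f : X ⟶ A) : Prop :=
  X ∈ 𝒳 ∧ ∀ X' : 𝒜, X' ∈ 𝒳 → ∀ g : X' ⟶ A, ∃ h : X' ⟶ X, h ≫ f = g

/-- `f : X ⟶ A` is an `𝒳`-cover of `A`. -/
def IsCover (𝒳 : Set 𝒜) {X A : 𝒜} (f : X ⟶ A) : Prop :=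
  IsPrecover 𝒳 f ∧ ∀ h : X ⟶ X, h ≫ f = f → IsIso h

/-- `f : A ⟶ Y` is a `𝒴`-preenvelope of `A`. -/
def IsPreenvelope (𝒴 : Set 𝒜) {A Y : 𝒜} (f : A ⟶ Y) : Prop :=
  Y ∈ 𝒴 ∧ ∀ Y' : 𝒜, Y' ∈ 𝒴 → ∀ g : A ⟶ Y', ∃ h : Y ⟶ Y', f ≫ h = g

/-- `f : A ⟶ Y` is a `𝒴`-envelope of `A`. -/
def IsEnvelope (𝒴 : Set 𝒜) {A Y : 𝒜} (f : A ⟶ Y) : Prop :=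
  IsPreenvelope 𝒴 f ∧ ∀ h : Y ⟶ Y, f ≫ h = f → IsIso h

/-- A class of objects closed under isomorphisms. -/
def ClosedUnderIsos (𝒳 : Set 𝒜) : Prop := ∀ X Y : 𝒜, (X ≅ Y) → X ∈ 𝒳 → Y ∈ 𝒳

/-- A class of objects closed under direct summands. -/
def ClosedUnderDirectSummands (𝒳 : Set 𝒜) : Prop :=
  ∀ X Y : 𝒜, (∃ (s : Y ⟶ X) (r : X ⟶ Y), s ≫ r = 𝟙 Y) → X ∈ 𝒳 → Y ∈ 𝒳

end ExactPaper

/-!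
Cover `A` by an `ℰ`-projective `P` with kernel `K`, take a `𝒴`-envelope `f : K ⟶ Y`, and push the
conflation `K ⟶ P ⟶ A` out along `f` to a conflation `Y ⟶ X ⟶ A`. It remains to see that `X` lies
in `^⊥𝒴`. As in Wakamatsu's lemma, closure of `𝒴` under extensions makes an envelope lift against
every admissible epic with kernel in `𝒴`: pulling such an epic back to `Y` gives an object of `𝒴`,
through which `f` factors, and the resulting endomorphism of `Y` fixing `f` is invertible. Left
lifting properties are stable under pushout, so `P ⟶ X` has the same one, and together with the
projectivity of `P` this splits every conflation ending in `X` and starting in `𝒴`.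
-/

namespace ExactPaper

namespace IsEnvelope

variable {𝒞 : Type u} [Category.{v} 𝒞] {𝒴 : Set 𝒞} {A Y : 𝒞} {f : A ⟶ Y}

lemma isZero_of_isZero [HasZeroMorphisms 𝒞] (hf : IsEnvelope 𝒴 f) (hA : IsZero A) : IsZero Y := by
  have : IsIso (0 : Y ⟶ Y) := hf.2 0 (hA.eq_of_src _ _)
  exact (IsZero.iff_id_eq_zero Y).2 ((cancel_mono (0 : Y ⟶ Y)).1 (by simp))

lemma exists_section_of_comp_eq (hf : IsEnvelope 𝒴 f) {W : 𝒞} (hW : W ∈ 𝒴) {a : A ⟶ W}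
    {q : W ⟶ Y} (haq : a ≫ q = f) : ∃ s : Y ⟶ W, f ≫ s = a ∧ s ≫ q = 𝟙 Y := by
  obtain ⟨h, rfl⟩ := hf.1.2 W hW a
  rw [assoc] at haq
  have : IsIso (h ≫ q) := hf.2 _ haq
  have f_comp_inv : f ≫ inv (h ≫ q) = f := (IsIso.comp_inv_eq _).2 haq.symm
  exact ⟨inv (h ≫ q) ≫ h, by rw [reassoc_of% f_comp_inv], by simp⟩

end IsEnvelope

section Preadditive

variable {𝒞 : Type u} [Category.{v} 𝒞] [Preadditive 𝒞] [Balanced 𝒞] {S : ShortComplex 𝒞}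

lemma exists_retraction_iff_exists_section (hS : S.ShortExact) :
    (∃ r : S.X₂ ⟶ S.X₁, S.f ≫ r = 𝟙 S.X₁) ↔ ∃ s : S.X₃ ⟶ S.X₂, s ≫ S.g = 𝟙 S.X₃ where
  mp := fun ⟨r, hr⟩ ↦
    let σ := ShortComplex.Splitting.ofExactOfRetraction S hS.exact r hr hS.epi_g
    ⟨σ.s, σ.s_g⟩
  mpr := fun ⟨s, hs⟩ ↦
    let σ := ShortComplex.Splitting.ofExactOfSection S hS.exact s hs hS.mono_f
    ⟨σ.r, σ.f_r⟩

lemma ClosedUnderIsos.kernel_mem {𝒴 : Set 𝒞} (h𝒴 : ClosedUnderIsos 𝒴) (hS : S.ShortExact)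
    [HasKernel S.g] (h₁ : S.X₁ ∈ 𝒴) : kernel S.g ∈ 𝒴 :=
  h𝒴 _ _ (hS.fIsKernel.conePointUniqueUpToIso (limit.isLimit _)) h₁

end Preadditive

variable {𝒜 : Type u} [Category.{v} 𝒜] [Abelian 𝒜]

section ShortExact

variable {S : ShortComplex 𝒜}

lemma shortExact_pullback (hS : S.ShortExact) {M : 𝒜} (g : M ⟶ S.X₃) :
    (ShortComplex.mk (pullback.lift S.f 0 (by simp)) (pullback.snd S.g g)
      (pullback.lift_snd _ _ _)).ShortExact := by
  have := hS.mono_f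
  have := hS.epi_g
  have mono_lift : Mono (pullback.lift S.f 0 (by simp) : S.X₁ ⟶ pullback S.g g) :=
    mono_of_mono_fac (pullback.lift_fst _ _ _)
  refine .mk' (ShortComplex.exact_of_f_is_kernel _ (KernelFork.IsLimit.ofι' _ _ fun k hk ↦ ?_))
    mono_lift inferInstance
  have comp_fst_comp_g : (k ≫ pullback.fst S.g g) ≫ S.g = 0 := by
    rw [assoc, pullback.condition, reassoc_of% hk, zero_comp]
  exact ⟨hS.exact.lift _ comp_fst_comp_g,
    pullback.hom_ext (by simp [pullback.lift_fst]) (by simp [pullback.lift_snd, hk])⟩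

lemma shortExact_pushout (hS : S.ShortExact) {N : 𝒜} (f : S.X₁ ⟶ N) :
    (ShortComplex.mk (pushout.inr S.f f) (pushout.desc S.g 0 (by simp))
      (pushout.inr_desc _ _ _)).ShortExact := by
  have := hS.mono_f
  have := hS.epi_g
  have epi_desc : Epi (pushout.desc S.g 0 (by simp) : pushout S.f f ⟶ S.X₃) :=
    epi_of_epi_fac (pushout.inl_desc _ _ _)
  refine .mk'
    (ShortComplex.exact_of_g_is_cokernel _ (CokernelCofork.IsColimit.ofπ' _ _ fun k hk ↦ ?_))
    inferInstance epi_desc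
  have f_comp_inl_comp : S.f ≫ pushout.inl S.f f ≫ k = 0 := by
    rw [pushout.condition_assoc, hk, comp_zero]
  exact ⟨hS.exact.desc _ f_comp_inl_comp,
    pushout.hom_ext (by simp [pushout.inl_desc_assoc]) (by simp [pushout.inr_desc_assoc, hk])⟩

end ShortExact

namespace ExactStructure

variable {E : ExactStructure 𝒜} {𝒴 : Set 𝒜} {S : ShortComplex 𝒜}

lemma conflation_of_admEpi (hS : S.ShortExact) (hg : AdmEpi E.conflation S.g) :
    E.conflation S := by
  obtain ⟨X, f, w, hf⟩ := hg
  have hker := (E.shortExact_of_conflation _ hf).fIsKernel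
  refine E.conflation_of_iso (.mk f S.g w) S (ShortComplex.isoMk
    (hker.conePointUniqueUpToIso hS.fIsKernel) (Iso.refl _) (Iso.refl _) ?_ (by simp)) hf
  simpa using hker.conePointUniqueUpToIso_hom_comp hS.fIsKernel .zero

lemma conflation_of_admMono (hS : S.ShortExact) (hf : AdmMono E.conflation S.f) :
    E.conflation S := by
  obtain ⟨Z, g, w, hg⟩ := hf
  have hcoker := (E.shortExact_of_conflation _ hg).gIsCokernel
  refine E.conflation_of_iso (.mk S.f g w) S (ShortComplex.isoMk
    (Iso.refl _) (Iso.refl _) (hcoker.coconePointUniqueUpToIso hS.gIsCokernel) (by simp) ?_) hg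
  simpa using (hcoker.comp_coconePointUniqueUpToIso_hom hS.gIsCokernel .one).symm

lemma conflation_pullback (hS : E.conflation S) {M : 𝒜} (g : M ⟶ S.X₃) :
    E.conflation (ShortComplex.mk (pullback.lift S.f 0 (by simp)) (pullback.snd S.g g)
      (pullback.lift_snd _ _ _)) :=
  conflation_of_admEpi (shortExact_pullback (E.shortExact_of_conflation S hS) g)
    (E.admEpi_pullback S.g g ⟨_, S.f, S.zero, hS⟩)

lemma conflation_pushout (hS : E.conflation S) {N : 𝒜} (f : S.X₁ ⟶ N) :
    E.conflation (ShortComplex.mk (pushout.inr S.f f) (pushout.desc S.g 0 (by simp))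
      (pushout.inr_desc _ _ _)) :=
  conflation_of_admMono (shortExact_pushout (E.shortExact_of_conflation S hS) f)
    (E.admMono_pushout S.f f ⟨_, S.g, S.zero, hS⟩)

lemma ext1Zero_iff_exists_section {M N : 𝒜} :
    E.Ext1Zero M N ↔ ∀ (Z : 𝒜) (i : N ⟶ Z) (p : Z ⟶ M) (w : i ≫ p = 0),
      E.conflation (ShortComplex.mk i p w) → ∃ s : M ⟶ Z, s ≫ p = 𝟙 M :=
  forall₅_congr fun _ _ _ _ h ↦
    exists_retraction_iff_exists_section (E.shortExact_of_conflation _ h)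

lemma Ext1Zero.exists_lift {M : 𝒜} (hM : E.Ext1Zero M S.X₁) (hS : E.conflation S)
    (g : M ⟶ S.X₃) : ∃ h : M ⟶ S.X₂, h ≫ S.g = g := by
  obtain ⟨s, hs⟩ := ext1Zero_iff_exists_section.1 hM _ _ _ _ (conflation_pullback hS g)
  exact ⟨s ≫ pullback.fst S.g g, by rw [assoc, pullback.condition, reassoc_of% hs]⟩

lemma isPrecover_leftPerp (hS : E.conflation S) (h₁ : S.X₁ ∈ 𝒴) (h₂ : S.X₂ ∈ E.leftPerp 𝒴) :
    IsPrecover (E.leftPerp 𝒴) S.g :=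
  ⟨h₂, fun _ hX g ↦ (hX _ h₁).exists_lift hS g⟩

lemma ClosedUnderExtensions.closedUnderIsos (h𝒴 : E.ClosedUnderExtensions 𝒴) {Z : 𝒜}
    (hZ : IsZero Z) (hZ𝒴 : Z ∈ 𝒴) : ClosedUnderIsos 𝒴 := fun _ _ e hX ↦
  h𝒴 (ShortComplex.mk e.hom (0 : _ ⟶ Z) comp_zero)
    (E.conflation_of_splitting _ { r := e.inv, s := 0, s_g := hZ.eq_of_src _ _ }) hX hZ𝒴

lemma ClosedUnderExtensions.hasLiftingProperty_of_isEnvelope (h𝒴 : E.ClosedUnderExtensions 𝒴)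
    {A Y : 𝒜} {f : A ⟶ Y} (hf : IsEnvelope 𝒴 f) (hS : E.conflation S) (h₁ : S.X₁ ∈ 𝒴) :
    HasLiftingProperty f S.g where
  sq_hasLift {k g} sq := by
    have pullback_mem : pullback S.g g ∈ 𝒴 := h𝒴 _ (conflation_pullback hS g) h₁ hf.1.1
    obtain ⟨s, f_comp_s, s_comp_snd⟩ := hf.exists_section_of_comp_eq pullback_mem
      (pullback.lift_snd k f sq.w)
    refine ⟨⟨{ l := s ≫ pullback.fst S.g g, fac_left := ?_, fac_right := ?_ }⟩⟩
    · rw [reassoc_of% f_comp_s, pullback.lift_fst]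
    · rw [assoc, pullback.condition, reassoc_of% s_comp_snd]

lemma EProjective.mem_leftPerp_of_hasLiftingProperty {P X : 𝒜} (hP : E.EProjective P)
    (j : P ⟶ X)
    (hj : ∀ S : ShortComplex 𝒜, E.conflation S → S.X₁ ∈ 𝒴 → HasLiftingProperty j S.g) :
    X ∈ E.leftPerp 𝒴 := by
  refine fun Y hY ↦ ext1Zero_iff_exists_section.2 fun Z i p w hS ↦ ?_
  obtain ⟨t, ht⟩ := hP _ hS j
  have : HasLiftingProperty j p := hj _ hS hY
  have sq : CommSq t j p (𝟙 X) := ⟨by simpa using ht⟩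
  exact ⟨sq.lift, sq.fac_right⟩

lemma EProjective.pushout_mem_leftPerp {P K Y : 𝒜} (hP : E.EProjective P)
    (h𝒴 : E.ClosedUnderExtensions 𝒴) (i : K ⟶ P) {f : K ⟶ Y} (hf : IsEnvelope 𝒴 f) :
    pushout i f ∈ E.leftPerp 𝒴 :=
  hP.mem_leftPerp_of_hasLiftingProperty (pushout.inl i f) fun S hS h₁ ↦
    have := h𝒴.hasLiftingProperty_of_isEnvelope hf hS h₁
    (IsPushout.of_hasPushout i f).hasLiftingProperty S.g

end ExactStructure

end ExactPaper

open ExactPaper ZeroObject in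
theorem precover_of_monoEnveloping_coresolving_general
    {𝒜 : Type u} [Category.{v} 𝒜] [Abelian 𝒜]
    (E : ExactStructure 𝒜) (hproj : E.EnoughProjectives)
    (𝒴 : Set 𝒜) (hext : E.ClosedUnderExtensions 𝒴)
    (henv : ∀ A : 𝒜, ∃ (Y : 𝒜) (f : A ⟶ Y), IsEnvelope 𝒴 f) (A : 𝒜) :
    ∃ (X : 𝒜) (p : X ⟶ A), Epi p ∧ IsPrecover (E.leftPerp 𝒴) p ∧ kernel p ∈ 𝒴 := by
  obtain ⟨K, P, i, p, w, hS, hP⟩ := hproj A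
  obtain ⟨Y, f, hf⟩ := henv K
  obtain ⟨Z, z, hz⟩ := henv 0
  have isos : ClosedUnderIsos 𝒴 :=
    hext.closedUnderIsos (hz.isZero_of_isZero (isZero_zero 𝒜)) hz.1.1
  have hconf := ExactStructure.conflation_pushout hS f
  have hexact := E.shortExact_of_conflation _ hconf
  exact ⟨pushout i f, _, hexact.epi_g,
    ExactStructure.isPrecover_leftPerp hconf hf.1.1 (hP.pushout_mem_leftPerp hext i hf),
    isos.kernel_mem hexact hf.1.1⟩

open ExactPaper CategoryTheory Limits in
/-- **Corollary 3.5(2)**: if `𝒴` is an `ℰ`-coresolving class such that every object admits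
a monomorphic `𝒴`-envelope, then every object `A` admits an epimorphic `^⊥𝒴`-precover
`p : X ⟶ A` with `Ker p ∈ 𝒴`. -/
theorem precover_of_monoEnveloping_coresolving
    {𝒜 : Type u} [Category.{v} 𝒜] [Abelian 𝒜]
    (E : ExactStructure 𝒜)
    (hproj : E.EnoughProjectives) (hinj : E.EnoughInjectives)
    (𝒴 : Set 𝒜) (hcores : E.Coresolving 𝒴)
    (henv : ∀ A : 𝒜, ∃ (Y : 𝒜) (f : A ⟶ Y), Mono f ∧ IsEnvelope 𝒴 f) :
    ∀ A : 𝒜, ∃ (X : 𝒜) (p : X ⟶ A),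
      Epi p ∧ IsPrecover (E.leftPerp 𝒴) p ∧ kernel p ∈ 𝒴 :=
  precover_of_monoEnveloping_coresolving_general E hproj 𝒴 hcores.2.1 fun A ↦
    let ⟨Y, f, _, hf⟩ := henv A
    ⟨Y, f, hf⟩
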